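/- arXiv:1304.4042 — 2 statements merged into one kernel-verified Lean document; each statement's English description precedes it below -/
import Mathlib

section
/- Let L_1, …, L_g be finite extensions of ℚ_p with rings of integers O_1, …, O_g, maximal ideals 𝔪_1, …, 𝔪_g, and absolute ramification indices e_1, …, e_g. Let G be a profinite abelian group and φ : ∏_{i=1}^g O_i^× → G a continuous group homomorphism whose image is open in G. Let r_1, …, r_g ≥ 0 be real numbers, and let μ be a locally constant distribution on G for which there exists C ∈ ℝ such that v_p(μ(1_{x·φ(∏_i V_i(n_i))})) ≥ C − (r_1 n_1 + ⋯ + r_g n_g) for all x ∈ G and all integers n_1, …, n_g ≥ 0, where V_i(0) = O_i^× and V_i(n) = 1 + 𝔪_i^n for n ≥ 1. Then for any choice of integers c_i > e_i/(p−1) (1 ≤ i ≤ g), setting H = φ(∏_i (1 + 𝔪_i^{c_i})), there exists C' ∈ ℝ such that v_p(μ(1_{x·H^{p^m}})) ≥ C' − (e_1 r_1 + ⋯ + e_g r_g)·m for all x ∈ G and all integers m ≥ 0, where H^{p^m} = { h^{p^m} : h ∈ H }. -/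
open Filter Topology

/-- The ring of integers `O_L = {x : L | ‖x‖ ≤ 1}` of a non-archimedean normed field. -/
def unitBall (L : Type*) [NormedField L] [IsUltrametricDist L] : Subring L where
  carrier := {x : L | ‖x‖ ≤ 1}
  mul_mem' := fun {a b} ha hb => by
    simp only [Set.mem_setOf_eq] at *
    calc ‖a * b‖ = ‖a‖ * ‖b‖ := norm_mul a b
    _ ≤ 1 * 1 := mul_le_mul ha hb (norm_nonneg b) zero_le_one
    _ = 1 := one_mul 1
  one_mem' := by simp
  add_mem' := fun {a b} ha hb =>
    le_trans (IsUltrametricDist.norm_add_le_max a b) (max_le ha hb)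
  zero_mem' := by simp
  neg_mem' := fun {a} ha => by simpa using ha

/-- The maximal ideal `𝔪 = {x ∈ O_L | ‖x‖ < 1}` of the ring of integers. -/
def maxIdeal (L : Type*) [NormedField L] [IsUltrametricDist L] : Ideal (unitBall L) where
  carrier := {x : unitBall L | ‖(x : L)‖ < 1}
  add_mem' := fun {a b} ha hb =>
    lt_of_le_of_lt (IsUltrametricDist.norm_add_le_max (a : L) (b : L)) (max_lt ha hb)
  zero_mem' := by simp
  smul_mem' := fun c x hx => by
    simp only [Set.mem_setOf_eq, smul_eq_mul] at *
    calc ‖(c : L) * (x : L)‖ = ‖(c : L)‖ * ‖(x : L)‖ := norm_mul _ _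
    _ ≤ 1 * ‖(x : L)‖ := mul_le_mul_of_nonneg_right c.2 (norm_nonneg _)
    _ < 1 := by simpa using hx

/-- `V(n) ⊆ O_L^×`: the full unit group for `n = 0`, and the congruence subgroup
`1 + 𝔪^n` for `n ≥ 1`. -/
def unitNbhd (L : Type*) [NormedField L] [IsUltrametricDist L] (n : ℕ) :
    Set (unitBall L)ˣ :=
  if n = 0 then Set.univ else {u : (unitBall L)ˣ | ((u : unitBall L) - 1) ∈ maxIdeal L ^ n}

section UnitBall

variable {L : Type*} [NormedField L] [IsUltrametricDist L]

lemma unitBall_dvd_iff {a b : unitBall L} : a ∣ b ↔ ‖(b : L)‖ ≤ ‖(a : L)‖ := by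
  constructor
  · rintro ⟨c, rfl⟩
    have hc : ‖(c : L)‖ ≤ 1 := c.2
    simpa using mul_le_mul_of_nonneg_left hc (norm_nonneg (a : L))
  · intro h
    by_cases ha : (a : L) = 0
    · have hb : (b : L) = 0 := by simpa [ha] using h
      exact ⟨0, Subtype.ext (by simp [hb])⟩
    · refine ⟨⟨(b : L) / a, ?_⟩, Subtype.ext ?_⟩
      · change ‖(b : L) / a‖ ≤ 1
        rw [norm_div]
        exact div_le_one_of_le₀ h (norm_nonneg _)
      · simp [mul_div_cancel₀ _ ha]

/-- If some power of the maximal ideal is generated by a nonzero nonunit, the maximal ideal is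
principal. -/
lemma exists_maxIdeal_eq_span {a : unitBall L} (ha0 : (a : L) ≠ 0) (ha1 : ‖(a : L)‖ < 1)
    {e : ℕ} (he : Ideal.span {a} = maxIdeal L ^ e) :
    ∃ ϖ : unitBall L, ϖ ∈ maxIdeal L ∧ maxIdeal L = Ideal.span {ϖ} := by
  by_contra! hcon
  have hlt : ∀ x ∈ maxIdeal L, ∃ y ∈ maxIdeal L, ‖(x : L)‖ < ‖(y : L)‖ := by
    intro x hx
    by_contra! h
    refine hcon x hx (le_antisymm (fun y hy => ?_) ((Ideal.span_singleton_le_iff_mem _).2 hx))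
    exact Ideal.mem_span_singleton.2 (unitBall_dvd_iff.2 (h y hy))
  obtain _ | k := e
  · have h1 : (1 : unitBall L) ∈ Ideal.span {a} := by rw [he]; simp
    have := unitBall_dvd_iff.1 (Ideal.mem_span_singleton.1 h1)
    simp only [OneMemClass.coe_one, norm_one] at this
    linarith
  · have key : ∀ w ∈ maxIdeal L * maxIdeal L ^ k, ‖(w : L)‖ < ‖(a : L)‖ := by
      intro w hw
      refine Submodule.mul_induction_on hw (fun x hx z hz => ?_) (fun x y hx hy => ?_)
      · obtain ⟨y, hy, hxy⟩ := hlt x hx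
        have hyz : y * z ∈ Ideal.span {a} := by
          rw [he, pow_succ']
          exact Ideal.mul_mem_mul hy hz
        have hle := unitBall_dvd_iff.1 (Ideal.mem_span_singleton.1 hyz)
        simp only [Subring.coe_mul, norm_mul] at hle ⊢
        rcases (norm_nonneg (z : L)).eq_or_lt with h | h
        · simpa [← h] using ha0
        · exact (mul_lt_mul_of_pos_right hxy h).trans_le hle
      · exact (IsUltrametricDist.norm_add_le_max (x : L) y).trans_lt (max_lt hx hy)
    refine lt_irrefl _ (key a ?_)
    rw [← pow_succ', ← he]
    exact Ideal.mem_span_singleton_self a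

lemma mem_maxIdeal_pow_iff {ϖ : unitBall L} (hϖ : maxIdeal L = Ideal.span {ϖ}) {n : ℕ}
    {x : unitBall L} : x ∈ maxIdeal L ^ n ↔ ‖(x : L)‖ ≤ ‖(ϖ : L)‖ ^ n := by
  rw [hϖ, Ideal.span_singleton_pow, Ideal.mem_span_singleton, unitBall_dvd_iff]
  simp

end UnitBall

section PowPrime

variable {L : Type*} [NormedField L] [IsUltrametricDist L] {p : ℕ}

lemma norm_sub_le_max_of_isUltrametricDist (x y : L) : ‖x - y‖ ≤ max ‖x‖ ‖y‖ := by
  simpa [sub_eq_add_neg] using IsUltrametricDist.norm_add_le_max x (-y)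

lemma norm_add_pow_prime_sub_le (hp : p.Prime) {b d : L} {ρ : ℝ} (hb : ‖b‖ ≤ 1)
    (hd : ‖d‖ ≤ ρ) (hρ : ρ ≤ 1) (hdp : ‖d‖ ^ (p - 1) ≤ ‖(p : L)‖ * ρ) :
    ‖(b + d) ^ p - b ^ p - p * b ^ (p - 1) * d‖ ≤ ‖(p : L)‖ * ρ * ‖d‖ := by
  obtain ⟨N, rfl⟩ : ∃ N, p = N + 2 := ⟨p - 2, by have := hp.two_le; omega⟩
  have hρ0 : 0 ≤ ρ := (norm_nonneg d).trans hd
  have hexp : (b + d) ^ (N + 2) - b ^ (N + 2) - ((N + 2 : ℕ) : L) * b ^ (N + 2 - 1) * d =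
      ∑ k ∈ Finset.range (N + 1), d ^ (k + 2) * b ^ (N - k) * ((N + 2).choose (k + 2) : L) := by
    rw [add_comm b d, add_pow, Finset.sum_range_succ', Finset.sum_range_succ']
    have : ∀ k, N + 2 - (k + 1 + 1) = N - k := fun k => by omega
    simp only [this]
    simp
    ring
  rw [hexp]
  refine IsUltrametricDist.norm_sum_le_of_forall_le_of_nonneg (by positivity) fun k hk => ?_
  have hbk : ‖b ^ (N - k)‖ ≤ 1 := by
    rw [norm_pow]; exact pow_le_one₀ (norm_nonneg _) hb
  rw [norm_mul, norm_mul]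
  rcases (Nat.lt_succ_iff.1 (Finset.mem_range.1 hk)).lt_or_eq with hkN | rfl
  · obtain ⟨t, ht⟩ := hp.dvd_choose_self (k := k + 2) (by omega) (by omega)
    have hch : ‖((N + 2).choose (k + 2) : L)‖ ≤ ‖((N + 2 : ℕ) : L)‖ := by
      rw [ht, Nat.cast_mul, norm_mul]
      exact mul_le_of_le_one_right (norm_nonneg _) (IsUltrametricDist.norm_natCast_le_one L t)
    have hdk : ‖d ^ (k + 2)‖ ≤ ρ * ‖d‖ := by
      rw [norm_pow]
      calc ‖d‖ ^ (k + 2) = ‖d‖ ^ k * (‖d‖ * ‖d‖) := by ring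
        _ ≤ 1 * (ρ * ‖d‖) := by
          gcongr
          exact pow_le_one₀ (norm_nonneg _) (hd.trans hρ)
        _ = ρ * ‖d‖ := one_mul _
    calc ‖d ^ (k + 2)‖ * ‖b ^ (N - k)‖ * ‖((N + 2).choose (k + 2) : L)‖
        ≤ (ρ * ‖d‖) * 1 * ‖((N + 2 : ℕ) : L)‖ := by gcongr
      _ = _ := by ring
  · simp only [Nat.choose_self, Nat.cast_one, norm_one, mul_one, norm_pow, Nat.sub_self, pow_zero]
    calc ‖d‖ ^ (k + 2) = ‖d‖ ^ (k + 2 - 1) * ‖d‖ := by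
          rw [show k + 2 - 1 = k + 1 by omega]; ring
      _ ≤ _ := by gcongr

/-- If `s ^ (p - 1) ≤ ‖p‖ ρ` with `s ≤ ρ ≤ 1`, raising to the `p`-th power maps the ball of radius
`s` around `1` into the ball of radius `‖p‖ s`. -/
lemma norm_one_add_pow_prime_sub_one_le (hp : p.Prime) {s ρ : ℝ} (hsρ : s ≤ ρ) (hρ : ρ ≤ 1)
    (hs : s ^ (p - 1) ≤ ‖(p : L)‖ * ρ) {y : L} (hy : ‖y‖ ≤ s) :
    ‖(1 + y) ^ p - 1‖ ≤ ‖(p : L)‖ * s := by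
  have h := norm_add_pow_prime_sub_le hp (b := 1) (d := y) (by simp) (hy.trans hsρ) hρ
    ((pow_le_pow_left₀ (norm_nonneg _) hy _).trans hs)
  have h2 : (1 + y) ^ p - 1 = ((1 + y) ^ p - 1 ^ p - p * 1 ^ (p - 1) * y) + p * y := by
    simp only [one_pow]; ring
  rw [h2]
  refine (IsUltrametricDist.norm_add_le_max _ _).trans (max_le (h.trans ?_) ?_)
  · rw [mul_assoc]
    gcongr
    exact (mul_le_of_le_one_left (norm_nonneg _) hρ).trans hy
  · rw [norm_mul]; gcongr

/-- If `s ^ (p - 1) ≤ ‖p‖ ρ` with `s ≤ ρ < 1`, every element of the ball of radius `‖p‖ s` around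
`1` is the `p`-th power of an element of the ball of radius `s` around `1`. -/
lemma exists_one_add_pow_prime_eq [CompleteSpace L] (hp : p.Prime) (hp0 : (p : L) ≠ 0)
    {s ρ : ℝ} (hs0 : 0 ≤ s) (hsρ : s ≤ ρ) (hρ : ρ < 1) (hs : s ^ (p - 1) ≤ ‖(p : L)‖ * ρ) {z : L}
    (hz : ‖z‖ ≤ ‖(p : L)‖ * s) : ∃ y : L, ‖y‖ ≤ s ∧ (1 + y) ^ p = 1 + z := by
  have hρ0 : 0 ≤ ρ := hs0.trans hsρ
  have hppos : 0 < ‖(p : L)‖ := norm_pos_iff.2 hp0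
  let T : L → L := fun y => y - ((1 + y) ^ p - 1 - z) / p
  have hmaps : Set.MapsTo T (Metric.closedBall 0 s) (Metric.closedBall 0 s) := by
    intro y hy
    simp only [mem_closedBall_zero_iff] at hy ⊢
    refine (norm_sub_le_max_of_isUltrametricDist _ _).trans (max_le hy ?_)
    rw [norm_div, div_le_iff₀ hppos, mul_comm]
    exact (norm_sub_le_max_of_isUltrametricDist _ _).trans
      (max_le (norm_one_add_pow_prime_sub_one_le hp hsρ hρ.le hs hy) hz)
  have hlip : ∀ y ∈ Metric.closedBall (0 : L) s, ∀ y' ∈ Metric.closedBall (0 : L) s,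
      ‖T y - T y'‖ ≤ ρ * ‖y - y'‖ := by
    intro y hy y' hy'
    simp only [mem_closedBall_zero_iff] at hy hy'
    have hd : ‖y - y'‖ ≤ s := (norm_sub_le_max_of_isUltrametricDist _ _).trans (max_le hy hy')
    have hb : ‖1 + y'‖ ≤ 1 := (IsUltrametricDist.norm_add_le_max _ _).trans
      (max_le (by simp) (hy'.trans (hsρ.trans hρ.le)))
    have hrem := norm_add_pow_prime_sub_le hp hb (hd.trans hsρ) hρ.le
      ((pow_le_pow_left₀ (norm_nonneg _) hd _).trans hs)
    have hunit : ‖1 - (1 + y') ^ (p - 1)‖ ≤ ρ := by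
      rw [← mul_neg_geom_sum (1 + y') (p - 1), norm_mul, show 1 - (1 + y') = -y' by ring,
        norm_neg]
      refine (mul_le_of_le_one_right (norm_nonneg _) ?_).trans (hy'.trans hsρ)
      refine IsUltrametricDist.norm_sum_le_of_forall_le_of_nonneg zero_le_one fun k _ => ?_
      rw [norm_pow]
      exact pow_le_one₀ (norm_nonneg _) hb
    have hT : T y - T y' = (1 - (1 + y') ^ (p - 1)) * (y - y') -
        ((1 + y' + (y - y')) ^ p - (1 + y') ^ p - p * (1 + y') ^ (p - 1) * (y - y')) / p := by
      rw [show 1 + y' + (y - y') = 1 + y by ring]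
      simp only [T]
      field_simp
      ring
    rw [hT]
    refine (norm_sub_le_max_of_isUltrametricDist _ _).trans (max_le ?_ ?_)
    · rw [norm_mul]; gcongr
    · rw [norm_div, div_le_iff₀ hppos]
      exact hrem.trans_eq (by ring)
  have hcontr : ContractingWith ⟨ρ, hρ0⟩ (hmaps.restrict T _ _) := by
    refine ⟨hρ, LipschitzWith.of_dist_le_mul fun y y' => ?_⟩
    rw [Subtype.dist_eq, Subtype.dist_eq, dist_eq_norm, dist_eq_norm]
    exact hlip y y.2 y' y'.2
  obtain ⟨y, hy, hfix, -⟩ := hcontr.exists_fixedPoint' Metric.isClosed_closedBall.isComplete hmaps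
    (Metric.mem_closedBall_self hs0) (edist_ne_top _ _)
  refine ⟨y, mem_closedBall_zero_iff.1 hy, ?_⟩
  have h0 : ((1 + y) ^ p - 1 - z) / p = 0 := sub_eq_self.1 hfix
  have h1 := (div_eq_zero_iff.1 h0).resolve_right hp0
  linear_combination h1

end PowPrime

section CongruenceUnits

variable {L : Type*} [NormedField L] [IsUltrametricDist L] [CompleteSpace L] {p : ℕ}

/-- The `p`-th power map sends `1 + 𝔪 ^ n` onto `1 + 𝔪 ^ (n + e)` when `n > e / (p - 1)`. -/
lemma sub_one_mem_maxIdeal_pow_iff_exists_pow_prime (hp : p.Prime) (hp0 : (p : L) ≠ 0)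
    (hp1 : ‖(p : L)‖ < 1) {e n : ℕ} (he : Ideal.span {(p : unitBall L)} = maxIdeal L ^ e)
    (hn : e < n * (p - 1)) (u : (unitBall L)ˣ) :
    (u : unitBall L) - 1 ∈ maxIdeal L ^ (n + e) ↔
      ∃ v : (unitBall L)ˣ, (v : unitBall L) - 1 ∈ maxIdeal L ^ n ∧ v ^ p = u := by
  obtain ⟨ϖ, hϖm, hϖ⟩ := exists_maxIdeal_eq_span (by simpa using hp0) (by simpa using hp1) he
  have hq0 : 0 ≤ ‖(ϖ : L)‖ := norm_nonneg _
  have hq1 : ‖(ϖ : L)‖ < 1 := hϖm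
  have hpe : ‖(p : L)‖ = ‖(ϖ : L)‖ ^ e := by
    apply le_antisymm
    · have hmem : (p : unitBall L) ∈ maxIdeal L ^ e := he ▸ Ideal.mem_span_singleton_self _
      simpa using (mem_maxIdeal_pow_iff hϖ).1 hmem
    · have hmem : ϖ ^ e ∈ Ideal.span {(p : unitBall L)} := by
        rw [he]; exact Ideal.pow_mem_pow hϖm e
      simpa using unitBall_dvd_iff.1 (Ideal.mem_span_singleton.1 hmem)
  have hn0 : n ≠ 0 := by rintro rfl; simp at hn
  have hsρ : ‖(ϖ : L)‖ ^ n ≤ ‖(ϖ : L)‖ := pow_le_of_le_one hq0 hq1.le hn0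
  have hs : (‖(ϖ : L)‖ ^ n) ^ (p - 1) ≤ ‖(p : L)‖ * ‖(ϖ : L)‖ := by
    rw [hpe, ← pow_mul, ← pow_succ]
    exact pow_le_pow_of_le_one hq0 hq1.le hn
  have hps : ‖(p : L)‖ * ‖(ϖ : L)‖ ^ n = ‖(ϖ : L)‖ ^ (n + e) := by rw [hpe]; ring
  simp only [mem_maxIdeal_pow_iff hϖ, ← hps]
  constructor
  · intro hu
    obtain ⟨y, hy, hyu⟩ := exists_one_add_pow_prime_eq hp hp0 (pow_nonneg hq0 n) hsρ hq1 hs hu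
    let w : unitBall L := 1 + ⟨y, hy.trans (hsρ.trans hq1.le)⟩
    have hw : w ^ p = u := Subtype.ext (by simpa [w] using hyu)
    obtain ⟨v, hv⟩ : IsUnit w := (isUnit_pow_iff hp.ne_zero).1 (hw ▸ u.isUnit)
    refine ⟨v, ?_, Units.ext (by simp [hv, hw])⟩
    rw [hv]
    simpa [w] using hy
  · rintro ⟨v, hv, rfl⟩
    simpa using norm_one_add_pow_prime_sub_one_le hp hsρ hq1.le hs hv

/-- `(1 + 𝔪 ^ n) ^ (p ^ m) = 1 + 𝔪 ^ (n + e m)` when `n > e / (p - 1)`. -/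
lemma sub_one_mem_maxIdeal_pow_iff_exists_pow_prime_pow (hp : p.Prime) (hp0 : (p : L) ≠ 0)
    (hp1 : ‖(p : L)‖ < 1) {e n : ℕ} (he : Ideal.span {(p : unitBall L)} = maxIdeal L ^ e)
    (hn : e < n * (p - 1)) (m : ℕ) (u : (unitBall L)ˣ) :
    (u : unitBall L) - 1 ∈ maxIdeal L ^ (n + e * m) ↔
      ∃ v : (unitBall L)ˣ, (v : unitBall L) - 1 ∈ maxIdeal L ^ n ∧ v ^ (p ^ m) = u := by
  induction m generalizing u with
  | zero => simp
  | succ m ih =>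
    have hnm : e < (n + e * m) * (p - 1) :=
      hn.trans_le (Nat.mul_le_mul_right _ (Nat.le_add_right _ _))
    rw [mul_add, mul_one, ← add_assoc,
      sub_one_mem_maxIdeal_pow_iff_exists_pow_prime hp hp0 hp1 he hnm]
    simp only [ih, pow_succ, pow_mul]
    constructor
    · rintro ⟨w, ⟨v, hv, rfl⟩, rfl⟩
      exact ⟨v, hv, rfl⟩
    · rintro ⟨v, hv, rfl⟩
      exact ⟨_, ⟨v, hv, rfl⟩, rfl⟩

end CongruenceUnits

/-- Let `L_1, …, L_g` be finite extensions of `ℚ_p` with ramification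
indices `e_i`, `G` a profinite abelian group and `φ : ∏_i O_i^× → G` a continuous
homomorphism with open image.  If a locally constant distribution `μ` on `G` satisfies
`v_p(μ(1_{x·φ(∏ V_i(n_i))})) ≥ C - Σ_i r_i n_i`, then for any `c_i > e_i/(p-1)` and
`H = φ(∏_i (1+𝔪_i^{c_i}))`, there is `C'` with
`v_p(μ(1_{x·H^{p^m}})) ≥ C' - (Σ_i e_i r_i)·m` for all `x ∈ G`, `m ≥ 0`. -/
theorem stmt9 (p : ℕ) [Fact p.Prime]
    (E : Type*) [NormedField E] [CompleteSpace E] [IsUltrametricDist E]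
    [Algebra ℚ_[p] E] [FiniteDimensional ℚ_[p] E]
    (hE : ∀ x : ℚ_[p], ‖algebraMap ℚ_[p] E x‖ = ‖x‖)
    (g : ℕ) (L : Fin g → Type*) [∀ i, NormedField (L i)] [∀ i, CompleteSpace (L i)]
    [∀ i, IsUltrametricDist (L i)] [∀ i, Algebra ℚ_[p] (L i)]
    [∀ i, FiniteDimensional ℚ_[p] (L i)]
    (hL : ∀ i, ∀ x : ℚ_[p], ‖algebraMap ℚ_[p] (L i) x‖ = ‖x‖)
    (e : Fin g → ℕ) (he : ∀ i, Ideal.span {(p : unitBall (L i))} = maxIdeal (L i) ^ (e i))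
    (G : Type*) [CommGroup G] [TopologicalSpace G] [IsTopologicalGroup G]
    [CompactSpace G] [T2Space G] [TotallyDisconnectedSpace G]
    (φ : ((i : Fin g) → (unitBall (L i))ˣ) →* G)
    (hφcont : Continuous φ) (hφopen : IsOpen (Set.range φ))
    (r : Fin g → ℝ) (hr : ∀ i, 0 ≤ r i)
    (μ : LocallyConstant G E →ₗ[E] E)
    (C : ℝ)
    (hgrowth : ∀ (x : G) (n : Fin g → ℕ) (f : LocallyConstant G E),
      ⇑f = Set.indicator
          {y : G | ∃ u : (i : Fin g) → (unitBall (L i))ˣ,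
            (∀ i, u i ∈ unitNbhd (L i) (n i)) ∧ y = x * φ u}
          (fun _ => (1 : E)) →
      ‖μ f‖ ≤ (p : ℝ) ^ ((∑ i : Fin g, r i * (n i : ℝ)) - C))
    (c : Fin g → ℕ) (hc : ∀ i, (e i : ℝ) / ((p : ℝ) - 1) < (c i : ℝ)) :
    ∃ C' : ℝ, ∀ (x : G) (m : ℕ) (f : LocallyConstant G E),
      ⇑f = Set.indicator
          {y : G | ∃ u : (i : Fin g) → (unitBall (L i))ˣ,
            (∀ i, ((u i : unitBall (L i)) - 1) ∈ maxIdeal (L i) ^ (c i)) ∧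
            y = x * (φ u) ^ (p ^ m)}
          (fun _ => (1 : E)) →
      ‖μ f‖ ≤ (p : ℝ) ^ ((∑ i : Fin g, (e i : ℝ) * r i) * (m : ℝ) - C') := by
  have hp : p.Prime := Fact.out
  have hpnorm : ∀ i, ‖(p : L i)‖ = (p : ℝ)⁻¹ := fun i => by
    simpa using hL i (p : ℚ_[p])
  have hp0 : ∀ i, (p : L i) ≠ 0 := fun i => by
    rw [← norm_pos_iff, hpnorm i]
    exact inv_pos.2 (mod_cast hp.pos)
  have hp1 : ∀ i, ‖(p : L i)‖ < 1 := fun i => by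
    rw [hpnorm i]
    exact inv_lt_one_of_one_lt₀ (mod_cast hp.one_lt)
  have hcn : ∀ i, e i < c i * (p - 1) := fun i => by
    have hpos : (0 : ℝ) < (p : ℝ) - 1 := sub_pos.2 (mod_cast hp.one_lt)
    rw [← Nat.cast_lt (α := ℝ), Nat.cast_mul, Nat.cast_sub hp.one_le, Nat.cast_one]
    exact (div_lt_iff₀ hpos).1 (hc i)
  refine ⟨C - ∑ i, r i * (c i : ℝ), fun x m f hf => ?_⟩
  have hset : {y : G | ∃ u : (i : Fin g) → (unitBall (L i))ˣ,
        (∀ i, ((u i : unitBall (L i)) - 1) ∈ maxIdeal (L i) ^ (c i)) ∧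
        y = x * (φ u) ^ (p ^ m)} =
      {y : G | ∃ u : (i : Fin g) → (unitBall (L i))ˣ,
        (∀ i, u i ∈ unitNbhd (L i) (c i + e i * m)) ∧ y = x * φ u} := by
    have hmem : ∀ i (u : (unitBall (L i))ˣ), u ∈ unitNbhd (L i) (c i + e i * m) ↔
        ∃ v : (unitBall (L i))ˣ, (v : unitBall (L i)) - 1 ∈ maxIdeal (L i) ^ (c i) ∧
          v ^ (p ^ m) = u := fun i u => by
      have hci : c i ≠ 0 := fun h => by simpa [h] using hcn i
      rw [← sub_one_mem_maxIdeal_pow_iff_exists_pow_prime_pow hp (hp0 i) (hp1 i) (he i) (hcn i),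
        unitNbhd, if_neg (by omega), Set.mem_ofPred_eq]
    ext y
    simp only [Set.mem_ofPred_eq, hmem]
    constructor
    · rintro ⟨u, hu, rfl⟩
      exact ⟨u ^ (p ^ m), fun i => ⟨u i, hu i, rfl⟩, by rw [map_pow]⟩
    · rintro ⟨u, hu, rfl⟩
      choose v hv hvu using hu
      exact ⟨v, hv, by rw [← map_pow, ← funext hvu]; rfl⟩
  rw [hset] at hf
  refine (hgrowth x (fun i => c i + e i * m) f hf).trans_eq ?_
  congr 1
  have hsum : ∑ i, r i * ((c i + e i * m : ℕ) : ℝ) =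
      ∑ i, r i * (c i : ℝ) + (∑ i, (e i : ℝ) * r i) * m := by
    rw [Finset.sum_mul, ← Finset.sum_add_distrib]
    refine Finset.sum_congr rfl fun i _ => ?_
    push_cast
    ring
  rw [hsum]
  ring
end

section
/- Let p be a prime, L a finite extension of ℚ_p of degree d, O_L its ring of integers, and 𝔞 a nonzero ideal of O_L (a free ℤ_p-module of rank d). Let w ∈ ℤ be such that the image of 𝔞 under the trace map Tr_{L/ℚ_p} : L → ℚ_p is equal to p^w ℤ_p. Then there exists a ℤ_p-basis b_1, …, b_d of 𝔞 such that Tr_{L/ℚ_p}(b_j) = p^w for every j = 1, …, d. -/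
open Filter Topology

/-- A finite free module over a principal ideal domain carrying a surjective functional `f` has a
basis on which `f` is constantly equal to `1`. -/
theorem Module.exists_basis_forall_apply_eq_one {R M : Type*} [CommRing R] [IsDomain R]
    [IsPrincipalIdealRing R] [AddCommGroup M] [Module R M] [Module.Free R M] [Module.Finite R M]
    {d : ℕ} (hd : Module.finrank R M = d) (f : M →ₗ[R] R) {x : M} (hx : f x = 1) :
    ∃ b : Module.Basis (Fin d) R M, ∀ j, f (b j) = 1 := by
  let k := Module.finBasis R (LinearMap.ker f)
  let b := Module.Basis.mkFinCons x k
    (fun c y hy h => by simpa [hx, LinearMap.mem_ker.mp hy] using congrArg f h)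
    (fun z => ⟨-f z, by simp [hx]⟩)
  have hb : ⇑b = Fin.cons x ((↑) ∘ k) := Module.Basis.coe_mkFinCons _ _ _ _
  obtain rfl : Module.finrank R (LinearMap.ker f) + 1 = d := by
    rw [← hd, Module.finrank_eq_card_basis b, Fintype.card_fin]
  let g : Module.Dual R M := b.constr R (Fin.cons 0 1)
  have hg (i) : g (b i) = (Fin.cons 0 1 : Fin (_ + 1) → R) i := b.constr_basis R _ i
  have hgx : g x = 0 := by simpa [hb] using hg 0
  refine ⟨b.map (LinearEquiv.transvection hgx), fun j => ?_⟩
  have key : f (b j) + g (b j) = 1 := by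
    rw [hg, hb]
    cases j using Fin.cases <;> simp [hx]
  simpa [LinearMap.transvection.apply, hx] using key

/-- A `ℤ_p`-submodule of a finite extension of `ℚ_p` contained in the closed unit ball is finitely
generated. -/
theorem Padic.submodule_fg_of_norm_le_one {p : ℕ} [Fact p.Prime] {L : Type*} [NormedField L]
    [NormedSpace ℚ_[p] L] [FiniteDimensional ℚ_[p] L] [Module ℤ_[p] L]
    [IsScalarTower ℤ_[p] ℚ_[p] L] (N : Submodule ℤ_[p] L) (hN : ∀ x ∈ N, ‖x‖ ≤ 1) : N.FG := by
  let e := Module.finBasis ℚ_[p] L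
  have hp : (p : ℚ_[p]) ≠ 0 := Nat.cast_ne_zero.mpr (Fact.out : p.Prime).ne_zero
  have hp1 : ‖(p : ℚ_[p])‖ < 1 := Padic.norm_p_lt_one
  have hbound (i) : ∃ n : ℕ, ∀ x ∈ N, ‖(p : ℚ_[p]) ^ n * e.coord i x‖ ≤ 1 := by
    let φ := LinearMap.toContinuousLinearMap (e.coord i)
    obtain ⟨n, hn⟩ := exists_pow_lt_of_lt_one (inv_pos.mpr (by positivity : 0 < ‖φ‖ + 1)) hp1
    refine ⟨n, fun x hx => ?_⟩
    have h1 : ‖e.coord i x‖ ≤ ‖φ‖ + 1 := calc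
      ‖φ x‖ ≤ ‖φ‖ := φ.unit_le_opNorm x (hN x hx)
      _ ≤ _ := by linarith
    rw [norm_mul, norm_pow]
    calc _ ≤ (‖φ‖ + 1)⁻¹ * (‖φ‖ + 1) := by gcongr
      _ = 1 := inv_mul_cancel₀ (by positivity)
  choose n hn using hbound
  let v (i) : L := ((p : ℚ_[p]) ^ n i)⁻¹ • e i
  have hle : N ≤ Submodule.span ℤ_[p] (Set.range v) := fun x hx => by
    rw [← e.sum_repr x]
    refine Submodule.sum_mem _ fun i _ => ?_
    let z : ℤ_[p] := ⟨_, hn i x hx⟩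
    have : e.repr x i • e i = z • v i := by
      rw [← algebraMap_smul ℚ_[p] z, smul_smul]
      congr 1
      change _ = (p : ℚ_[p]) ^ n i * e.repr x i * _
      field_simp
    rw [this]
    exact Submodule.smul_mem _ _ (Submodule.subset_span ⟨i, rfl⟩)
  have := isNoetherian_span_of_finite ℤ_[p] (Set.finite_range v)
  exact Submodule.FG.of_le_of_isNoetherian hle

/-- Let `L` be a finite extension of `ℚ_p` of degree `d` and let `𝔞` be a
nonzero ideal of the ring of integers `O_L` (viewed as a `ℤ_p`-submodule of `L`, free of
rank `d`).  If the image of `𝔞` under the trace `Tr_{L/ℚ_p}` equals `p^w ℤ_p`, then `𝔞` has a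
`ℤ_p`-basis `b_1, …, b_d` with `Tr_{L/ℚ_p}(b_j) = p^w` for every `j`. -/
theorem stmt10 (p : ℕ) [Fact p.Prime] (L : Type*) [NormedField L] [CompleteSpace L]
    [IsUltrametricDist L] [Algebra ℚ_[p] L] [FiniteDimensional ℚ_[p] L]
    [Algebra ℤ_[p] L] [IsScalarTower ℤ_[p] ℚ_[p] L]
    (hL : ∀ x : ℚ_[p], ‖algebraMap ℚ_[p] L x‖ = ‖x‖)
    (d : ℕ) (hd : Module.finrank ℚ_[p] L = d)
    (𝔞 : Submodule ℤ_[p] L)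
    -- `𝔞` is contained in the ring of integers `O_L = {x | ‖x‖ ≤ 1}` …
    (h𝔞int : ∀ x ∈ 𝔞, ‖x‖ ≤ 1)
    -- … and is an ideal of `O_L`
    (h𝔞ideal : ∀ x ∈ 𝔞, ∀ y : L, ‖y‖ ≤ 1 → y * x ∈ 𝔞)
    (h𝔞ne : 𝔞 ≠ ⊥)
    (w : ℤ)
    (htrace : (fun x : L => Algebra.trace ℚ_[p] L x) '' (𝔞 : Set L) =
      {y : ℚ_[p] | ∃ z : ℤ_[p], y = (p : ℚ_[p]) ^ w * (z : ℚ_[p])}) :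
    ∃ b : Module.Basis (Fin d) ℤ_[p] 𝔞,
      ∀ j : Fin d, Algebra.trace ℚ_[p] L ((b j : L)) = (p : ℚ_[p]) ^ w := by
  let _ : NormedSpace ℚ_[p] L :=
    { norm_smul_le := fun a x => by rw [Algebra.smul_def, norm_mul, hL] }
  have hp : (p : ℚ_[p]) ≠ 0 := Nat.cast_ne_zero.mpr (Fact.out : p.Prime).ne_zero
  have hpw : (p : ℚ_[p]) ^ w ≠ 0 := zpow_ne_zero _ hp
  have hspan : Submodule.span ℚ_[p] (𝔞 : Set L) = ⊤ := by
    obtain ⟨x, hx, hx0⟩ := 𝔞.ne_bot_iff.mp h𝔞ne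
    refine eq_top_iff.mpr fun y _ => ?_
    obtain ⟨c, hc0, hc⟩ := NormedField.exists_norm_lt ℚ_[p]
      (inv_pos.mpr (by positivity : 0 < ‖y / x‖ + 1))
    have hc1 : ‖c • (y / x)‖ ≤ 1 := by
      rw [norm_smul]
      calc _ ≤ (‖y / x‖ + 1)⁻¹ * (‖y / x‖ + 1) := by gcongr; linarith
        _ = 1 := inv_mul_cancel₀ (by positivity)
    have hy : y = c⁻¹ • (c • (y / x) * x) := by
      rw [smul_mul_assoc, div_mul_cancel₀ _ hx0, inv_smul_smul₀ (norm_pos_iff.mp hc0)]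
    rw [hy]
    exact Submodule.smul_mem _ _ (Submodule.subset_span (h𝔞ideal x hx _ hc1))
  have : 𝔞.IsLattice ℚ_[p] := ⟨Padic.submodule_fg_of_norm_le_one 𝔞 h𝔞int, hspan⟩
  have hrank : Module.finrank ℤ_[p] 𝔞 = d :=
    (congrArg Cardinal.toNat (Submodule.IsLattice.rank' ℚ_[p] 𝔞)).trans hd
  have : Module.Free ℤ_[p] 𝔞 := Submodule.IsLattice.free ℚ_[p] 𝔞
  have htr (x : 𝔞) : ‖((p : ℚ_[p]) ^ w)⁻¹ * Algebra.trace ℚ_[p] L x‖ ≤ 1 := by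
    obtain ⟨z, hz⟩ := htrace.subset ⟨x, x.2, rfl⟩
    simp only at hz
    rw [hz, inv_mul_cancel_left₀ hpw]
    exact z.2
  let f : 𝔞 →ₗ[ℤ_[p]] ℤ_[p] :=
    { toFun := fun x => ⟨_, htr x⟩
      map_add' := fun x y => Subtype.ext (by simp [mul_add]; rfl)
      map_smul' := fun a x => Subtype.ext (by
        have : ((a • x : 𝔞) : L) = (a : ℚ_[p]) • (x : L) := (algebraMap_smul ℚ_[p] a (x : L)).symm
        simp [this, mul_left_comm]
        rfl) }
  obtain ⟨x, hx, hx1⟩ := htrace.superset ⟨1, rfl⟩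
  have hf (y : 𝔞) : f y = 1 ↔ Algebra.trace ℚ_[p] L y = (p : ℚ_[p]) ^ w := by
    rw [eq_comm (b := (p : ℚ_[p]) ^ w), ← inv_mul_eq_one₀ hpw]
    exact Subtype.ext_iff
  obtain ⟨b, hb⟩ := Module.exists_basis_forall_apply_eq_one hrank f (x := ⟨x, hx⟩)
    ((hf _).mpr (by simpa using hx1))
  exact ⟨b, fun j => (hf _).mp (hb j)⟩
end
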